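/- Let U be a unicyclic graph with at least 3 vertices, let w ∈ V(U), and let G₁ be the graph obtained from U by adding k ≥ 2 new pendant vertices v₁, …, v_k each adjacent to w. Then φ(G₁, w¹) = φ(U, w¹) + k·φ(U − N[w]), where N[w] is the closed neighbourhood of w in U. -/

import Mathlib

open SimpleGraph

/-- A dissociation set: a set of vertices inducing a subgraph of maximum degree at most 1,
i.e., every vertex of `S` has at most one neighbour inside `S`. -/
def IsDissoc {V : Type*} (G : SimpleGraph V) (S : Set V) : Prop :=
  ∀ v ∈ S, {u | u ∈ S ∧ G.Adj v u}.Subsingleton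

/-- A maximal dissociation set: a dissociation set not properly contained in another one. -/
def IsMaxDissoc {V : Type*} (G : SimpleGraph V) (S : Set V) : Prop :=
  IsDissoc G S ∧ ∀ T : Set V, IsDissoc G T → S ⊆ T → S = T

/-- `phi G` is the number of maximal dissociation sets of `G`. -/
noncomputable def phi {V : Type*} (G : SimpleGraph V) : ℕ :=
  {S : Set V | IsMaxDissoc G S}.ncard

/-- The number of maximal dissociation sets of `G` not containing `u`. -/
noncomputable def phiNot {V : Type*} (G : SimpleGraph V) (u : V) : ℕ :=
  {S : Set V | IsMaxDissoc G S ∧ u ∉ S}.ncard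

/-- The number of maximal dissociation sets `S` of `G` with `u ∈ S` and
`u` of degree 0 in the subgraph induced by `S`. -/
noncomputable def phi0 {V : Type*} (G : SimpleGraph V) (u : V) : ℕ :=
  {S : Set V | IsMaxDissoc G S ∧ u ∈ S ∧ ∀ x ∈ S, ¬ G.Adj u x}.ncard

/-- The number of maximal dissociation sets `S` of `G` with `u ∈ S` and
`u` of degree 1 in the subgraph induced by `S`. -/
noncomputable def phi1 {V : Type*} (G : SimpleGraph V) (u : V) : ℕ :=
  {S : Set V | IsMaxDissoc G S ∧ u ∈ S ∧ ∃! x, x ∈ S ∧ G.Adj u x}.ncard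

/-- A unicyclic graph: a connected graph whose number of edges equals its number of vertices
(equivalently, a connected graph with exactly one cycle). -/
def IsUnicyclic {V : Type*} [Fintype V] (G : SimpleGraph V) : Prop :=
  G.Connected ∧ G.edgeSet.ncard = Fintype.card V

/-- The tree `T(p,q)` (for `q ≤ p`): obtained from the star `K_{1,p}` by subdividing
exactly `q` of its edges.  The centre is `Sum.inl ()`, the `p` neighbours of the centre are
`Sum.inr (Sum.inl i)`, and for `j < q` the vertex `Sum.inr (Sum.inr j)` is the subdivision
pendant attached to the `j`-th neighbour.  It has `1 + p + q` vertices. -/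
def treeT (p q : ℕ) (h : q ≤ p) : SimpleGraph (Unit ⊕ Fin p ⊕ Fin q) :=
  SimpleGraph.fromRel fun a b =>
    (∃ i : Fin p, a = Sum.inl () ∧ b = Sum.inr (Sum.inl i)) ∨
    (∃ j : Fin q, a = Sum.inr (Sum.inl (Fin.castLE h j)) ∧ b = Sum.inr (Sum.inr j))

/-- The unicyclic graph `U(p,q)` (for `q ≤ p`): obtained by identifying one vertex of the
triangle `K₃` with the centre of `T(p,q)`.  The centre is `Sum.inl ()`, the two other triangle
vertices are `Sum.inr (Sum.inl 0)` and `Sum.inr (Sum.inl 1)`, and the copy of `T(p,q)` sits on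
the remaining vertices.  It has `3 + p + q` vertices. -/
def graphU (p q : ℕ) (h : q ≤ p) : SimpleGraph (Unit ⊕ Fin 2 ⊕ Fin p ⊕ Fin q) :=
  SimpleGraph.fromRel fun a b =>
    (a = Sum.inl () ∧ b = Sum.inr (Sum.inl 0)) ∨
    (a = Sum.inl () ∧ b = Sum.inr (Sum.inl 1)) ∨
    (a = Sum.inr (Sum.inl 0) ∧ b = Sum.inr (Sum.inl 1)) ∨
    (∃ i : Fin p, a = Sum.inl () ∧ b = Sum.inr (Sum.inr (Sum.inl i))) ∨
    (∃ j : Fin q, a = Sum.inr (Sum.inr (Sum.inl (Fin.castLE h j))) ∧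
      b = Sum.inr (Sum.inr (Sum.inr j)))

/-- The unicyclic graph obtained from the cycle `C_r` by attaching one pendant vertex
`Sum.inr j` to the cycle vertex `Sum.inl (f j)` for each `j : Fin t`.  For injective `f`
this is a member of the class `𝒰_{r,t}`. -/
def graphUrtF (r t : ℕ) (f : Fin t → Fin r) : SimpleGraph (Fin r ⊕ Fin t) :=
  SimpleGraph.fromRel fun a b =>
    (∃ i j : Fin r, a = Sum.inl i ∧ b = Sum.inl j ∧ (cycleGraph r).Adj i j) ∨
    (∃ j : Fin t, a = Sum.inl (f j) ∧ b = Sum.inr j)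

/-- The canonical member `U_{r,t}` of `𝒰_{r,t}` (for `t ≤ r`): the cycle `C_r` with one
pendant vertex attached to each of its first `t` vertices. -/
def graphUrt (r t : ℕ) (h : t ≤ r) : SimpleGraph (Fin r ⊕ Fin t) :=
  graphUrtF r t (Fin.castLE h)

/-- A caterpillar: a tree in which deleting all vertices of degree 1 leaves a path. -/
def IsCaterpillar {V : Type*} [Fintype V] (G : SimpleGraph V) : Prop :=
  G.IsTree ∧ ∃ m : ℕ,
    Nonempty ((G.induce {v | 2 ≤ (G.neighborSet v).ncard}) ≃g SimpleGraph.pathGraph m)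

/-- The graph `G₁` obtained from `U` by adding `k` new pendant vertices
`v₁ = Sum.inr 0, …, v_k = Sum.inr (k-1)`, each adjacent to `w`. -/
def addPendants {V : Type*} (U : SimpleGraph V) (w : V) (k : ℕ) : SimpleGraph (V ⊕ Fin k) :=
  SimpleGraph.fromRel fun a b =>
    (∃ x y, a = Sum.inl x ∧ b = Sum.inl y ∧ U.Adj x y) ∨
    (∃ j : Fin k, a = Sum.inl w ∧ b = Sum.inr j)

/-- The graph `G₂ = G₁ - w v_k + v₁ v_k`: obtained from `U` by attaching the pendant vertices
`v₁, …, v_{k-1}` to `w` and the vertex `v_k` to `v₁`. -/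
def swapPendant {V : Type*} (U : SimpleGraph V) (w : V) (k : ℕ) : SimpleGraph (V ⊕ Fin k) :=
  SimpleGraph.fromRel fun a b =>
    (∃ x y, a = Sum.inl x ∧ b = Sum.inl y ∧ U.Adj x y) ∨
    (∃ j : Fin k, j.val < k - 1 ∧ a = Sum.inl w ∧ b = Sum.inr j) ∨
    (∃ j₀ j₁ : Fin k, j₀.val = 0 ∧ j₁.val = k - 1 ∧ a = Sum.inr j₀ ∧ b = Sum.inr j₁)

/-- The graph obtained from `H` by attaching a pendant path of length 2 at `w`:
two new vertices `v = Sum.inr 0` and `u = Sum.inr 1` with edges `w v` and `v u`. -/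
def addPath2 {V : Type*} (H : SimpleGraph V) (w : V) : SimpleGraph (V ⊕ Fin 2) :=
  SimpleGraph.fromRel fun a b =>
    (∃ x y, a = Sum.inl x ∧ b = Sum.inl y ∧ H.Adj x y) ∨
    (a = Sum.inl w ∧ b = Sum.inr 0) ∨
    (a = Sum.inr 0 ∧ b = Sum.inr 1)

/-!
A dissociation set containing two adjacent vertices `w` and `x` contains no other vertex of
`N[w] ∪ N[x]`, so removing `w` and `x` is an order isomorphism onto the dissociation sets of
`G - (N[w] ∪ N[x])`. Grouping the maximal dissociation sets in which `w` has degree 1 by the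
neighbour `x` of `w` they contain gives `φ(G, w¹) = ∑ φ(G - (N[w] ∪ N[x]))`, summed over
`x ∈ N(w)`. For `G₁`, deleting `N[w]` removes every pendant vertex, so a neighbour of `w` in `U`
contributes the same term as in `φ(U, w¹)`, and each `v_j`, whose only neighbour is `w`,
contributes `φ(U - N[w])`.
-/

section Dissoc

variable {V W : Type*} {G : SimpleGraph V} {H : SimpleGraph W} {S T : Set V}

theorem IsDissoc.eq_of_adj (hS : IsDissoc G S) {v a b : V} (hv : v ∈ S) (ha : a ∈ S)
    (hb : b ∈ S) (hva : G.Adj v a) (hvb : G.Adj v b) : a = b :=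
  hS v hv ⟨ha, hva⟩ ⟨hb, hvb⟩

theorem IsDissoc.mono (hS : IsDissoc G S) (hTS : T ⊆ S) : IsDissoc G T :=
  fun v hv => (hS v (hTS hv)).anti fun _ hu => ⟨hTS hu.1, hu.2⟩

theorem isDissoc_pair (w x : V) : IsDissoc G {w, x} := by
  rintro v (rfl | rfl) a ⟨rfl | rfl, ha⟩ b ⟨rfl | rfl, hb⟩ <;> simp_all

theorem IsDissoc.union (hS : IsDissoc G S) (hT : IsDissoc G T)
    (hST : ∀ a ∈ S, ∀ b ∈ T, ¬ G.Adj a b) : IsDissoc G (S ∪ T) := by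
  rintro v (hv | hv) a ⟨ha, hva⟩ b ⟨hb, hvb⟩
  · exact hS.eq_of_adj hv (ha.resolve_right fun h => hST v hv a h hva)
      (hb.resolve_right fun h => hST v hv b h hvb) hva hvb
  · exact hT.eq_of_adj hv (ha.resolve_left fun h => hST a h v hv hva.symm)
      (hb.resolve_left fun h => hST b h v hv hvb.symm) hva hvb

theorem isDissoc_image_iff (f : G ↪g H) : IsDissoc H (f '' S) ↔ IsDissoc G S := by
  constructor
  · intro h v hv a ⟨ha, hva⟩ b ⟨hb, hvb⟩
    exact f.injective (h.eq_of_adj ⟨v, hv, rfl⟩ ⟨a, ha, rfl⟩ ⟨b, hb, rfl⟩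
      (f.map_adj_iff.2 hva) (f.map_adj_iff.2 hvb))
  · rintro h _ ⟨v, hv, rfl⟩ _ ⟨⟨a, ha, rfl⟩, hva⟩ _ ⟨⟨b, hb, rfl⟩, hvb⟩
    exact congrArg f (h.eq_of_adj hv ha hb (f.map_adj_iff.1 hva) (f.map_adj_iff.1 hvb))

theorem isMaxDissoc_iff_maximal : IsMaxDissoc G S ↔ Maximal (IsDissoc G) S :=
  maximal_subset_iff.symm

/-- The family of dissociation sets of `G`, ordered by inclusion. -/
def dissocSets (G : SimpleGraph V) : Set (Set V) :=
  {S | IsDissoc G S}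

/-- The family of maximal dissociation sets of `G`, counted by `phi G`. -/
def maxDissocSets (G : SimpleGraph V) : Set (Set V) :=
  {S | IsMaxDissoc G S}

theorem setOf_maximal_mem_dissocSets :
    {S | Maximal (· ∈ dissocSets G) S} = maxDissocSets G :=
  Set.ext fun _ => isMaxDissoc_iff_maximal.symm

/-- The order isomorphism between the dissociation sets of isomorphic graphs. -/
def dissocSetsCongr (e : G ≃g H) : dissocSets G ≃o dissocSets H :=
  ((Equiv.Set.congr e.toEquiv).subtypeEquiv
    fun _ => (isDissoc_image_iff e.toEmbedding).symm).toOrderIso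
      (fun _ _ h => Set.image_mono h) (fun _ _ h => Set.image_mono h)

/-- The bijection between the maximal dissociation sets of isomorphic graphs. -/
def maxDissocSetsCongr (e : G ≃g H) : maxDissocSets G ≃ maxDissocSets H :=
  (Equiv.setCongr setOf_maximal_mem_dissocSets.symm).trans <|
    (dissocSetsCongr e).mapSetOfPredMaximal.toEquiv.trans <|
      Equiv.setCongr setOf_maximal_mem_dissocSets

/-- An embedding of graphs carrying `s` onto `t` restricts to an isomorphism of the subgraphs
induced on `s` and `t`. -/
noncomputable def induceIsoOfImageEq (f : G ↪g H) {s : Set V} {t : Set W} (h : f '' s = t) :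
    G.induce s ≃g H.induce t where
  toEquiv := (Equiv.Set.image f s f.injective).trans (Equiv.setCongr h)
  map_rel_iff' := f.map_adj_iff

end Dissoc

section Edge

variable {V : Type*} {G : SimpleGraph V} {S : Set V} {w x : V}

/-- The set of vertices adjacent to neither `w` nor `x`. When `w` and `x` are adjacent, it is
the complement of `N[w] ∪ N[x]`, since then `w ∈ N(x)` and `x ∈ N(w)`. -/
def edgeExterior (G : SimpleGraph V) (w x : V) : Set V :=
  (G.neighborSet w ∪ G.neighborSet x)ᶜ

@[simp]
theorem mem_edgeExterior {v : V} : v ∈ edgeExterior G w x ↔ ¬ G.Adj w v ∧ ¬ G.Adj x v := by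
  simp [edgeExterior]

theorem disjoint_pair_edgeExterior (hwx : G.Adj w x) :
    Disjoint {w, x} (edgeExterior G w x) := by
  simp [hwx, hwx.symm]

theorem IsDissoc.subset_pair_union_edgeExterior (hS : IsDissoc G S) (hw : w ∈ S) (hx : x ∈ S)
    (hwx : G.Adj w x) : S ⊆ {w, x} ∪ edgeExterior G w x := by
  intro v hv
  by_cases hwv : G.Adj w v
  · exact Or.inl (Or.inr (hS.eq_of_adj hw hv hx hwv hwx))
  by_cases hxv : G.Adj x v
  · exact Or.inl (Or.inl (hS.eq_of_adj hx hv hw hxv hwx.symm))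
  · exact Or.inr (mem_edgeExterior.2 ⟨hwv, hxv⟩)

/-- The family of dissociation sets of `G` containing both `w` and `x`. -/
def dissocSetsThrough (G : SimpleGraph V) (w x : V) : Set (Set V) :=
  {S | IsDissoc G S ∧ w ∈ S ∧ x ∈ S}

/-- The family of maximal dissociation sets of `G` containing both `w` and `x`. -/
def maxDissocSetsThrough (G : SimpleGraph V) (w x : V) : Set (Set V) :=
  {S | IsMaxDissoc G S ∧ w ∈ S ∧ x ∈ S}

theorem setOf_maximal_mem_dissocSetsThrough :
    {S | Maximal (· ∈ dissocSetsThrough G w x) S} = maxDissocSetsThrough G w x := by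
  ext S
  constructor
  · rintro ⟨⟨hS, hw, hx⟩, hmax⟩
    exact ⟨isMaxDissoc_iff_maximal.2 ⟨hS, fun T hT hST => hmax ⟨hT, hST hw, hST hx⟩ hST⟩, hw, hx⟩
  · rintro ⟨hS, hwx⟩
    exact (isMaxDissoc_iff_maximal.1 hS).and_right (Q := fun T => w ∈ T ∧ x ∈ T) hwx

theorem pair_union_image_mem_dissocSetsThrough {A : Set (edgeExterior G w x)}
    (hA : IsDissoc (G.induce (edgeExterior G w x)) A) :
    {w, x} ∪ Subtype.val '' A ∈ dissocSetsThrough G w x := by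
  refine ⟨(isDissoc_pair w x).union ((isDissoc_image_iff (Embedding.induce _)).2 hA) ?_,
    by simp, by simp⟩
  rintro a (rfl | rfl) _ ⟨b, -, rfl⟩
  exacts [(mem_edgeExterior.1 b.2).1, (mem_edgeExterior.1 b.2).2]

theorem IsDissoc.preimage_val (hS : IsDissoc G S) (s : Set V) :
    IsDissoc (G.induce s) (Subtype.val ⁻¹' S) :=
  (isDissoc_image_iff (Embedding.induce s)).1 (hS.mono (Set.image_preimage_subset _ S))

/-- The dissociation sets containing both ends of an edge `wx` correspond, by removing `w` and
`x`, to the dissociation sets of `G - (N[w] ∪ N[x])`. -/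
def dissocSetsThroughOrderIso (hwx : G.Adj w x) :
    dissocSetsThrough G w x ≃o dissocSets (G.induce (edgeExterior G w x)) :=
  Equiv.toOrderIso
    { toFun S := ⟨Subtype.val ⁻¹' S.1, S.2.1.preimage_val _⟩
      invFun A := ⟨{w, x} ∪ Subtype.val '' A.1, pair_union_image_mem_dissocSetsThrough A.2⟩
      left_inv := by
        rintro ⟨S, hS, hw, hx⟩
        have hpair : {w, x} ⊆ S := Set.pair_subset hw hx
        refine Subtype.ext ?_
        simp only [Subtype.image_preimage_coe, Set.union_inter_distrib_left]
        rw [Set.union_eq_self_of_subset_left hpair]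
        exact Set.inter_eq_right.2 (hS.subset_pair_union_edgeExterior hw hx hwx)
      right_inv A := by
        refine Subtype.ext ?_
        simp only [Set.preimage_union, Set.preimage_image_eq _ Subtype.val_injective,
          Subtype.preimage_coe_eq_empty.2 (disjoint_pair_edgeExterior hwx).symm.inter_eq,
          Set.empty_union] }
    (fun _ _ h => Set.preimage_mono h)
    (fun _ _ h => Set.union_subset_union_right _ (Set.image_mono h))

/-- The restriction of `dissocSetsThroughOrderIso` to maximal sets. -/
def maxDissocSetsThroughEquiv (hwx : G.Adj w x) :
    maxDissocSetsThrough G w x ≃ maxDissocSets (G.induce (edgeExterior G w x)) :=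
  (Equiv.setCongr setOf_maximal_mem_dissocSetsThrough.symm).trans <|
    (dissocSetsThroughOrderIso hwx).mapSetOfPredMaximal.toEquiv.trans <|
      Equiv.setCongr setOf_maximal_mem_dissocSets

/-- The family of maximal dissociation sets of `G` in which `w` has degree 1, counted by
`phi1 G w`. -/
def maxDissocSetsDegOne (G : SimpleGraph V) (w : V) : Set (Set V) :=
  {S | IsMaxDissoc G S ∧ w ∈ S ∧ ∃! x, x ∈ S ∧ G.Adj w x}

theorem maxDissocSetsDegOne_eq_iUnion :
    maxDissocSetsDegOne G w = ⋃ x : G.neighborSet w, maxDissocSetsThrough G w x := by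
  ext S
  rw [Set.mem_iUnion]
  constructor
  · rintro ⟨hS, hw, x, ⟨hx, hwx⟩, -⟩
    exact ⟨⟨x, hwx⟩, hS, hw, hx⟩
  · rintro ⟨⟨x, hwx⟩, hS, hw, hx⟩
    exact ⟨hS, hw, x, ⟨hx, hwx⟩, fun y hy => hS.1.eq_of_adj hw hy.1 hx hy.2 hwx⟩

theorem pairwise_disjoint_maxDissocSetsThrough :
    Pairwise (Function.onFun Disjoint fun x : G.neighborSet w => maxDissocSetsThrough G w x) := by
  intro x y hxy
  refine Set.disjoint_left.2 fun S ⟨hS, hw, hx⟩ ⟨_, _, hy⟩ => hxy ?_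
  exact Subtype.ext (hS.1.eq_of_adj hw hx hy x.2 y.2)

/-- The decomposition behind `φ(G, w¹) = ∑ φ(G - (N[w] ∪ N[x]))`, the sum running over the
neighbours `x` of `w`. -/
noncomputable def maxDissocSetsDegOneEquiv (G : SimpleGraph V) (w : V) :
    maxDissocSetsDegOne G w ≃
      Σ x : G.neighborSet w, maxDissocSets (G.induce (edgeExterior G w x)) :=
  (Equiv.setCongr maxDissocSetsDegOne_eq_iUnion).trans <|
    (Set.unionEqSigmaOfDisjoint pairwise_disjoint_maxDissocSetsThrough).trans <|
      Equiv.sigmaCongrRight fun x => maxDissocSetsThroughEquiv x.2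

end Edge

section AddPendants

variable {V : Type*} {U : SimpleGraph V} {w x y : V} {k : ℕ} {j : Fin k}

@[simp]
theorem addPendants_adj_inl_inl :
    (addPendants U w k).Adj (Sum.inl x) (Sum.inl y) ↔ U.Adj x y := by
  simp only [addPendants, SimpleGraph.fromRel_adj]
  constructor
  · rintro ⟨-, h⟩
    simpa [U.adj_comm y x] using h
  · intro h
    simp [h, h.ne]

@[simp]
theorem addPendants_adj_inl_inr :
    (addPendants U w k).Adj (Sum.inl x) (Sum.inr j) ↔ x = w := by
  simp [addPendants]

@[simp]
theorem addPendants_adj_inr_inl :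
    (addPendants U w k).Adj (Sum.inr j) (Sum.inl x) ↔ x = w := by
  simp [addPendants]

/-- The inclusion of `U` into the graph obtained by adding pendant vertices. -/
def addPendantsInl (U : SimpleGraph V) (w : V) (k : ℕ) : U ↪g addPendants U w k where
  toEmbedding := Function.Embedding.inl
  map_rel_iff' := addPendants_adj_inl_inl

@[simp]
theorem addPendantsInl_apply (U : SimpleGraph V) (w : V) (k : ℕ) (x : V) :
    addPendantsInl U w k x = Sum.inl x :=
  rfl

/-- The neighbours of `w` after adding `k` pendant vertices at `w`: those in `U`, and the
pendant vertices. -/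
def neighborSetAddPendantsEquiv (U : SimpleGraph V) (w : V) (k : ℕ) :
    U.neighborSet w ⊕ Fin k ≃ (addPendants U w k).neighborSet (Sum.inl w) where
  toFun := Sum.elim (fun x => ⟨Sum.inl x, addPendants_adj_inl_inl.2 x.2⟩)
    (fun j => ⟨Sum.inr j, addPendants_adj_inl_inr.2 rfl⟩)
  invFun
    | ⟨Sum.inl x, hx⟩ => Sum.inl ⟨x, addPendants_adj_inl_inl.1 hx⟩
    | ⟨Sum.inr j, _⟩ => Sum.inr j
  left_inv := by rintro (_ | _) <;> rfl
  right_inv := by rintro ⟨_ | _, _⟩ <;> rfl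

theorem edgeExterior_addPendants_inl (U : SimpleGraph V) (w x : V) (k : ℕ) :
    addPendantsInl U w k '' edgeExterior U w x =
      edgeExterior (addPendants U w k) (Sum.inl w) (Sum.inl x) := by
  ext (v | j) <;> simp

theorem edgeExterior_addPendants_inr (U : SimpleGraph V) (w : V) (j : Fin k) :
    addPendantsInl U w k '' {v | v ∉ insert w (U.neighborSet w)} =
      edgeExterior (addPendants U w k) (Sum.inl w) (Sum.inr j) := by
  ext (v | i) <;> simp [and_comm]

/-- The maximal dissociation sets counted by `φ(G₁, w¹)`, split according to whether the
neighbour of `w` lies in `U` or is one of the `k` pendant vertices. -/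
noncomputable def maxDissocSetsDegOneAddPendantsEquiv (U : SimpleGraph V) (w : V) (k : ℕ) :
    maxDissocSetsDegOne (addPendants U w k) (Sum.inl w) ≃
      maxDissocSetsDegOne U w ⊕
        Fin k × maxDissocSets (U.induce {v | v ∉ insert w (U.neighborSet w)}) :=
  let G₁ := addPendants U w k
  let exteriorSets (y : V ⊕ Fin k) := maxDissocSets (G₁.induce (edgeExterior G₁ (Sum.inl w) y))
  let inlEquiv (x : U.neighborSet w) :
      exteriorSets (Sum.inl x) ≃ maxDissocSets (U.induce (edgeExterior U w x)) :=
    maxDissocSetsCongr (induceIsoOfImageEq _ (edgeExterior_addPendants_inl U w x k)).symm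
  let inrEquiv (j : Fin k) :
      exteriorSets (Sum.inr j) ≃ maxDissocSets (U.induce {v | v ∉ insert w (U.neighborSet w)}) :=
    maxDissocSetsCongr (induceIsoOfImageEq _ (edgeExterior_addPendants_inr U w j)).symm
  calc ↥(maxDissocSetsDegOne G₁ (Sum.inl w))
    _ ≃ Σ y : G₁.neighborSet (Sum.inl w), exteriorSets y := maxDissocSetsDegOneEquiv G₁ _
    _ ≃ Σ s : U.neighborSet w ⊕ Fin k, exteriorSets (neighborSetAddPendantsEquiv U w k s) :=
        (Equiv.sigmaCongrLeft (neighborSetAddPendantsEquiv U w k)).symm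
    _ ≃ (Σ x : U.neighborSet w, exteriorSets (Sum.inl x)) ⊕ Σ j : Fin k, exteriorSets (Sum.inr j) :=
        Equiv.sumSigmaDistrib _
    _ ≃ (Σ x : U.neighborSet w, maxDissocSets (U.induce (edgeExterior U w x))) ⊕
          Fin k × maxDissocSets (U.induce {v | v ∉ insert w (U.neighborSet w)}) :=
        (Equiv.sigmaCongrRight inlEquiv).sumCongr
          ((Equiv.sigmaCongrRight inrEquiv).trans (Equiv.sigmaEquivProd _ _))
    _ ≃ _ := (maxDissocSetsDegOneEquiv U w).symm.sumCongr (Equiv.refl _)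

end AddPendants

theorem stmt18_general {V : Type*} (U : SimpleGraph V) (w : V) (k : ℕ) :
    (maxDissocSetsDegOne (addPendants U w k) (Sum.inl w)).encard =
      (maxDissocSetsDegOne U w).encard +
        k * (maxDissocSets (U.induce {v | v ∉ insert w (U.neighborSet w)})).encard := by
  simp only [← ENat.card_coe_set_eq, ENat.card_congr (maxDissocSetsDegOneAddPendantsEquiv U w k),
    ENat.card_sum, ENat.card_prod, ENat.card_eq_coe_fintype_card, Fintype.card_fin]

/-- let `U` be a unicyclic graph with at least 3 vertices, `w ∈ V(U)`, and `G₁`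
obtained from `U` by adding `k ≥ 2` pendant vertices at `w`. Then
`φ(G₁, w¹) = φ(U, w¹) + k · φ(U - N[w])`. -/
theorem stmt18 {V : Type*} [Fintype V] (U : SimpleGraph V) (hU : IsUnicyclic U)
    (hV : 3 ≤ Fintype.card V) (w : V) (k : ℕ) (hk : 2 ≤ k) :
    phi1 (addPendants U w k) (Sum.inl w) =
      phi1 U w + k * phi (U.induce {v | v ∉ insert w (U.neighborSet w)}) := by
  have h := by simpa only [← (Set.toFinite _).cast_ncard_eq] using stmt18_general U w k
  exact_mod_cast h
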